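/- Von Neumann entropy is subadditive: if ρ is a density matrix on ℂ^n ⊗ ℂ^m with partial traces ρ_1 = Tr_2(ρ) and ρ_2 = Tr_1(ρ), then ρ_1 and ρ_2 are density matrices and VN(ρ) ≤ VN(ρ_1) + VN(ρ_2). -/

import Mathlib

/-!
Subadditivity is Klein's inequality `Tr (ρ log ρ) ≥ Tr (ρ log (ρ₁ ⊗ ρ₂))`, reduced here to a
statement about finite sums so that no matrix logarithm is needed.

Let `U`, `V` diagonalize `ρ₁`, `ρ₂` with eigenvalues `p`, `q`, put `W = U ⊗ V`, and let `d` be the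
diagonal of `Wᴴ ρ W`. The marginals of `d` are exactly `p` and `q` (`ptrace2_conj`,
`ptrace1_conj`), so `∑ d log (p q) = ∑ p log p + ∑ q log q` (`sum_mul_log_marginals`); positivity
of `ρ` gives `d ≥ 0`, hence `d (i, j) = 0` whenever `p i * q j = 0`.

If `X` diagonalizes `ρ` with eigenvalues `l`, then `d = B l` for the doubly stochastic matrix
`B a k = |(Wᴴ X) a k|²`. Averaging the scalar inequality `t log t - t log r ≥ t - r` with weights
`B` gives `∑ d log (p q) ≤ ∑ l log l`, since both `l` and `p q` sum to `1`
(`doublyStochastic_klein`, `klein_of_unitary`).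
-/

open Matrix ComplexOrder

/-- The von Neumann entropy of a matrix: the Shannon entropy of its
eigenvalues (with multiplicity) if it is Hermitian, `0` otherwise
(the junk value is never used for density matrices). -/
noncomputable def VN {ι : Type*} [Fintype ι] [DecidableEq ι]
    (ρ : Matrix ι ι ℂ) : ℝ :=
  if h : ρ.IsHermitian then
    -∑ i, h.eigenvalues i * Real.log (h.eigenvalues i)
  else 0

/-- A density matrix: positive semidefinite with trace 1. -/
def IsDensityMatrix {ι : Type*} [Fintype ι] [DecidableEq ι]
    (ρ : Matrix ι ι ℂ) : Prop :=
  ρ.PosSemidef ∧ ρ.trace = 1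

/-- Partial trace over the first factor. -/
noncomputable def ptrace1 {n m : ℕ}
    (ρ : Matrix (Fin n × Fin m) (Fin n × Fin m) ℂ) : Matrix (Fin m) (Fin m) ℂ :=
  Matrix.of fun j j' => ∑ i, ρ (i, j) (i, j')

/-- Partial trace over the second factor. -/
noncomputable def ptrace2 {n m : ℕ}
    (ρ : Matrix (Fin n × Fin m) (Fin n × Fin m) ℂ) : Matrix (Fin n) (Fin n) ℂ :=
  Matrix.of fun i i' => ∑ j, ρ (i, j) (i', j)

/-- Klein's inequality in scalar form: `t log t - t log r ≥ t - r`. -/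
lemma sub_le_mul_log_sub {t r : ℝ} (ht : 0 ≤ t) (hr : 0 < r) :
    t - r ≤ t * Real.log t - t * Real.log r := by
  rcases ht.eq_or_lt with rfl | ht
  · simpa using hr.le
  · have h := Real.log_le_sub_one_of_pos (div_pos hr ht)
    rw [Real.log_div hr.ne' ht.ne'] at h
    have h2 := mul_le_mul_of_nonneg_left h ht.le
    have h3 : t * (r / t - 1) = r - t := by field_simp
    linarith

/-- Klein's inequality for spectra: with `B` doubly stochastic, average the scalar inequality for
`l k` and `r a` with weights `B a k`. Rows with `r a = 0`, where `Real.log (r a)` is a junk value,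
contribute nothing by `hsupp`. -/
lemma doublyStochastic_klein {α κ : Type*} [Fintype α] [Fintype κ] (B : α → κ → ℝ)
    (l : κ → ℝ) (r : α → ℝ) (hB : ∀ a k, 0 ≤ B a k) (hrow : ∀ a, ∑ k, B a k = 1)
    (hcol : ∀ k, ∑ a, B a k = 1) (hl : ∀ k, 0 ≤ l k) (hr : ∀ a, 0 ≤ r a)
    (hsum : ∑ k, l k = ∑ a, r a) (hsupp : ∀ a, r a = 0 → ∑ k, B a k * l k = 0) :
    ∑ a, (∑ k, B a k * l k) * Real.log (r a) ≤ ∑ k, l k * Real.log (l k) := by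
  have hterm : ∀ a k, B a k * l k - B a k * r a ≤
      B a k * (l k * Real.log (l k)) - B a k * l k * Real.log (r a) := by
    intro a k
    rcases (hr a).eq_or_lt with h0 | hpos
    · -- The sum in `hsupp` has nonnegative terms, so each `B a k * l k` vanishes.
      have h := (Finset.sum_eq_zero_iff_of_nonneg
        (fun k _ => mul_nonneg (hB a k) (hl k))).1 (hsupp a h0.symm) k (Finset.mem_univ k)
      rw [← mul_assoc, h, ← h0]
      simp
    · have h := mul_le_mul_of_nonneg_left (sub_le_mul_log_sub (hl k) hpos) (hB a k)
      linarith
  have h := Finset.sum_le_sum fun a (_ : a ∈ Finset.univ) =>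
    Finset.sum_le_sum fun k (_ : k ∈ Finset.univ) => hterm a k
  simp only [Finset.sum_sub_distrib] at h
  have hBl : ∀ f : κ → ℝ, ∑ a, ∑ k, B a k * f k = ∑ k, f k := by
    intro f
    rw [Finset.sum_comm]
    simp [← Finset.sum_mul, hcol]
  rw [hBl, hBl] at h
  simp only [← Finset.sum_mul, hrow, one_mul] at h
  linarith

lemma sum_normSq_row {α : Type*} [Fintype α] [DecidableEq α] {M : Matrix α α ℂ}
    (h : M * Mᴴ = 1) (a : α) : ∑ k, Complex.normSq (M a k) = 1 := by
  have h1 := congrFun (congrFun h a) a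
  simp only [Matrix.mul_apply, Matrix.conjTranspose_apply, Matrix.one_apply_eq,
    Complex.star_def, Complex.mul_conj] at h1
  exact_mod_cast h1

lemma sum_normSq_col {α : Type*} [Fintype α] [DecidableEq α] {M : Matrix α α ℂ}
    (h : Mᴴ * M = 1) (k : α) : ∑ a, Complex.normSq (M a k) = 1 := by
  have := sum_normSq_row (M := Mᴴ) (by simpa using h) k
  simpa [Complex.normSq_conj] using this

lemma conj_diagonal_apply_self {α : Type*} [Fintype α] [DecidableEq α] (M : Matrix α α ℂ)
    (l : α → ℝ) (a : α) :
    (M * diagonal (fun k => (l k : ℂ)) * Mᴴ) a a =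
      ((∑ k, Complex.normSq (M a k) * l k : ℝ) : ℂ) := by
  simp only [Matrix.mul_apply (M := _ * _), Matrix.mul_diagonal, Matrix.conjTranspose_apply]
  push_cast
  refine Finset.sum_congr rfl fun k _ => ?_
  rw [← Complex.mul_conj, Complex.star_def]
  ring

open Kronecker in
/-- Under a local change of basis `U ⊗ V`, the unitary on the factor traced out drops out. -/
lemma ptrace2_conj {n m : ℕ} (ρ : Matrix (Fin n × Fin m) (Fin n × Fin m) ℂ)
    (U : Matrix (Fin n) (Fin n) ℂ) (V : Matrix (Fin m) (Fin m) ℂ) (hV : V * Vᴴ = 1) :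
    ptrace2 ((U ⊗ₖ V)ᴴ * ρ * (U ⊗ₖ V)) = Uᴴ * ptrace2 ρ * U := by
  have hδ : ∀ d b, ∑ j, V d j * star (V b j) = if d = b then 1 else 0 := by
    intro d b
    simpa [Matrix.mul_apply, Matrix.one_apply] using congrFun (congrFun hV d) b
  ext i i'
  have key : ∀ c d a b, ∑ j, star (U a i * V b j) * ρ (a, b) (c, d) * (U c i' * V d j) =
      if d = b then star (U a i) * ρ (a, b) (c, d) * U c i' else 0 := by
    intro c d a b
    rw [← mul_boole, ← hδ, Finset.mul_sum]
    refine Finset.sum_congr rfl fun j _ => ?_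
    rw [star_mul']
    ring
  simp only [ptrace2, Matrix.of_apply, Matrix.mul_apply, Matrix.conjTranspose_apply,
    Matrix.kroneckerMap_apply, Fintype.sum_prod_type, Finset.sum_mul, Finset.mul_sum]
  rw [Finset.sum_comm]
  refine Finset.sum_congr rfl fun c _ => ?_
  rw [Finset.sum_comm]
  calc _ = ∑ d, ∑ a, ∑ b, ∑ j,
        star (U a i * V b j) * ρ (a, b) (c, d) * (U c i' * V d j) := by
        refine Finset.sum_congr rfl fun d _ => ?_
        rw [Finset.sum_comm]
        refine Finset.sum_congr rfl fun a _ => ?_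
        rw [Finset.sum_comm]
    _ = _ := by
        simp only [key]
        rw [Finset.sum_comm]
        simp

lemma ptrace1_eq_ptrace2_swap {n m : ℕ} (ρ : Matrix (Fin n × Fin m) (Fin n × Fin m) ℂ) :
    ptrace1 ρ = ptrace2 (ρ.submatrix Prod.swap Prod.swap) := rfl

open Kronecker in
lemma ptrace1_conj {n m : ℕ} (ρ : Matrix (Fin n × Fin m) (Fin n × Fin m) ℂ)
    (U : Matrix (Fin n) (Fin n) ℂ) (V : Matrix (Fin m) (Fin m) ℂ) (hU : U * Uᴴ = 1) :
    ptrace1 ((U ⊗ₖ V)ᴴ * ρ * (U ⊗ₖ V)) = Vᴴ * ptrace1 ρ * V := by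
  have hswap : V ⊗ₖ U = (U ⊗ₖ V).submatrix (Equiv.prodComm _ _) (Equiv.prodComm _ _) := by
    ext a b
    simp [mul_comm]
  rw [ptrace1_eq_ptrace2_swap ρ, ← ptrace2_conj _ V U hU, ptrace1_eq_ptrace2_swap, hswap,
    Matrix.conjTranspose_submatrix]
  change _ = ptrace2 (_ * ρ.submatrix (Equiv.prodComm _ _) (Equiv.prodComm _ _) * _)
  rw [Matrix.submatrix_mul_equiv, Matrix.submatrix_mul_equiv]
  rfl

lemma IsDensityMatrix.ptrace2 {n m : ℕ} {ρ : Matrix (Fin n × Fin m) (Fin n × Fin m) ℂ}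
    (hρ : IsDensityMatrix ρ) : IsDensityMatrix (ptrace2 ρ) := by
  refine ⟨?_, ?_⟩
  · have : _root_.ptrace2 ρ = ∑ j, ρ.submatrix (fun i => (i, j)) (fun i => (i, j)) := by
      ext i i'
      simp [_root_.ptrace2, Matrix.sum_apply]
    rw [this]
    exact Matrix.posSemidef_sum _ fun j _ => hρ.1.submatrix _
  · rw [← hρ.2]
    simp [Matrix.trace, _root_.ptrace2, Fintype.sum_prod_type]

lemma IsDensityMatrix.ptrace1 {n m : ℕ} {ρ : Matrix (Fin n × Fin m) (Fin n × Fin m) ℂ}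
    (hρ : IsDensityMatrix ρ) : IsDensityMatrix (ptrace1 ρ) := by
  refine IsDensityMatrix.ptrace2 (ρ := ρ.submatrix Prod.swap Prod.swap) ⟨hρ.1.submatrix _, ?_⟩
  rw [← hρ.2]
  exact (Equiv.prodComm _ _).sum_comp fun x => ρ x x

lemma Matrix.IsHermitian.conj_eigenvectorUnitary {α : Type*} [Fintype α] [DecidableEq α]
    {A : Matrix α α ℂ} (hA : A.IsHermitian) :
    (hA.eigenvectorUnitary : Matrix α α ℂ)ᴴ * A * (hA.eigenvectorUnitary : Matrix α α ℂ) =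
      diagonal (fun k => (hA.eigenvalues k : ℂ)) := by
  have h := hA.conjStarAlgAut_star_eigenvectorUnitary
  rw [Unitary.conjStarAlgAut_star_apply] at h
  exact h

lemma IsDensityMatrix.sum_eigenvalues {α : Type*} [Fintype α] [DecidableEq α]
    {A : Matrix α α ℂ} (hA : IsDensityMatrix A) : ∑ k, hA.1.isHermitian.eigenvalues k = 1 := by
  have h := hA.1.isHermitian.trace_eq_sum_eigenvalues
  have h1 : ∑ k, (hA.1.isHermitian.eigenvalues k : ℂ) = 1 := h.symm.trans hA.2
  exact_mod_cast h1

/-- Klein's inequality `Tr (ρ log ρ) ≥ Tr (ρ log σ)`, where `σ` is diagonal with eigenvalues `r`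
in the orthonormal basis formed by the columns of `W`, and `d` is the diagonal of `ρ` in that
basis. The condition `hsupp` says that the support of `ρ` lies in that of `σ`. -/
lemma klein_of_unitary {α : Type*} [Fintype α] [DecidableEq α] {ρ : Matrix α α ℂ}
    (hρ : IsDensityMatrix ρ) {W : Matrix α α ℂ} (hW : W * Wᴴ = 1) (d r : α → ℝ)
    (hd : ∀ a, (Wᴴ * ρ * W) a a = d a) (hr : ∀ a, 0 ≤ r a) (hsum : ∑ a, r a = 1)
    (hsupp : ∀ a, r a = 0 → d a = 0) :
    ∑ a, d a * Real.log (r a) ≤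
      ∑ k, hρ.1.isHermitian.eigenvalues k * Real.log (hρ.1.isHermitian.eigenvalues k) := by
  set hH := hρ.1.isHermitian
  set X : Matrix α α ℂ := (hH.eigenvectorUnitary : Matrix α α ℂ) with hX
  have hX1 : X * Xᴴ = 1 := Unitary.mul_star_self_of_mem hH.eigenvectorUnitary.2
  have hX2 : Xᴴ * X = 1 := Unitary.star_mul_self_of_mem hH.eigenvectorUnitary.2
  have hW2 : Wᴴ * W = 1 := mul_eq_one_comm.1 hW
  have hspec : ρ = X * diagonal (fun k => (hH.eigenvalues k : ℂ)) * Xᴴ := by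
    rw [← hH.conj_eigenvectorUnitary, ← hX]
    calc ρ = (X * Xᴴ) * ρ * (X * Xᴴ) := by simp [hX1]
      _ = _ := by simp only [Matrix.mul_assoc]
  have hM1 : (Wᴴ * X) * (Wᴴ * X)ᴴ = 1 := by
    calc (Wᴴ * X) * (Wᴴ * X)ᴴ = Wᴴ * (X * Xᴴ) * W := by simp [Matrix.mul_assoc]
      _ = 1 := by simp [hX1, hW2]
  have hdB : ∀ a, d a = ∑ k, Complex.normSq ((Wᴴ * X) a k) * hH.eigenvalues k := by
    intro a
    have h : Wᴴ * ρ * W =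
        (Wᴴ * X) * diagonal (fun k => (hH.eigenvalues k : ℂ)) * (Wᴴ * X)ᴴ := by
      conv_lhs => rw [hspec]
      simp [Matrix.mul_assoc]
    have h2 := hd a
    rw [h, conj_diagonal_apply_self] at h2
    exact_mod_cast h2.symm
  have key := doublyStochastic_klein (fun a k => Complex.normSq ((Wᴴ * X) a k)) hH.eigenvalues r
    (fun _ _ => Complex.normSq_nonneg _) (sum_normSq_row hM1)
    (sum_normSq_col (mul_eq_one_comm.1 hM1)) hρ.1.eigenvalues_nonneg hr
    (hρ.sum_eigenvalues.trans hsum.symm) (fun a ha => (hdB a).symm.trans (hsupp a ha))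
  simpa only [← hdB] using key

/-- The cross-entropy of an array `d` relative to the product of its marginals `p` and `q` is the
sum of the entropies of the marginals (with signs reversed). The condition `hsupp` makes
`log (p i * q j)` split wherever `d (i, j)` does not vanish. -/
lemma sum_mul_log_marginals {α β : Type*} [Fintype α] [Fintype β] (d : α × β → ℝ)
    (p : α → ℝ) (q : β → ℝ) (hp : ∀ i, ∑ j, d (i, j) = p i) (hq : ∀ j, ∑ i, d (i, j) = q j)
    (hsupp : ∀ a, p a.1 * q a.2 = 0 → d a = 0) :
    ∑ a, d a * Real.log (p a.1 * q a.2) =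
      ∑ i, p i * Real.log (p i) + ∑ j, q j * Real.log (q j) := by
  have hsplit : ∀ a, d a * Real.log (p a.1 * q a.2) =
      d a * Real.log (p a.1) + d a * Real.log (q a.2) := by
    intro a
    by_cases h : p a.1 * q a.2 = 0
    · simp [hsupp a h]
    · obtain ⟨h1, h2⟩ := mul_ne_zero_iff.1 h
      rw [Real.log_mul h1 h2, mul_add]
  simp only [hsplit, Finset.sum_add_distrib]
  rw [Fintype.sum_prod_type, Fintype.sum_prod_type_right]
  simp only [← Finset.sum_mul, hp, hq]

/-- von Neumann entropy is subadditive: the partial traces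
`ρ₁ = Tr₂(ρ)` and `ρ₂ = Tr₁(ρ)` of a density matrix `ρ` are density matrices
and `VN(ρ) ≤ VN(ρ₁) + VN(ρ₂)`. -/
theorem vonNeumann_subadditive (n m : ℕ)
    (ρ : Matrix (Fin n × Fin m) (Fin n × Fin m) ℂ) (hρ : IsDensityMatrix ρ) :
    IsDensityMatrix (ptrace2 ρ) ∧ IsDensityMatrix (ptrace1 ρ) ∧
    VN ρ ≤ VN (ptrace2 ρ) + VN (ptrace1 ρ) := by
  refine ⟨hρ.ptrace2, hρ.ptrace1, ?_⟩
  have hH1 := hρ.ptrace2.1.isHermitian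
  have hH2 := hρ.ptrace1.1.isHermitian
  rw [VN, VN, VN, dif_pos hρ.1.isHermitian, dif_pos hH1, dif_pos hH2]
  set U : Matrix (Fin n) (Fin n) ℂ := (hH1.eigenvectorUnitary : Matrix (Fin n) (Fin n) ℂ) with hUdef
  set V : Matrix (Fin m) (Fin m) ℂ := (hH2.eigenvectorUnitary : Matrix (Fin m) (Fin m) ℂ) with hVdef
  have hU : U * Uᴴ = 1 := Unitary.mul_star_self_of_mem hH1.eigenvectorUnitary.2
  have hV : V * Vᴴ = 1 := Unitary.mul_star_self_of_mem hH2.eigenvectorUnitary.2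
  set W := kroneckerMap (· * ·) U V with hWdef
  have hW : W * Wᴴ = 1 := by
    rw [hWdef, Matrix.conjTranspose_kronecker, ← Matrix.mul_kronecker_mul, hU, hV,
      Matrix.one_kronecker_one]
  have hpos : (Wᴴ * ρ * W).PosSemidef := hρ.1.conjTranspose_mul_mul_same W
  set d : Fin n × Fin m → ℝ := fun a => ((Wᴴ * ρ * W) a a).re with hddef
  have hd : ∀ a, (Wᴴ * ρ * W) a a = d a := fun a => Complex.eq_re_of_ofReal_le hpos.diag_nonneg
  have hd0 : ∀ a, 0 ≤ d a := fun a => (Complex.le_def.1 (hpos.diag_nonneg (i := a))).1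
  have hp : ∀ i, ∑ j, d (i, j) = hH1.eigenvalues i := by
    intro i
    have h := congrFun (congrFun (ptrace2_conj ρ U V hV) i) i
    rw [hUdef, hH1.conj_eigenvectorUnitary, Matrix.diagonal_apply_eq] at h
    have hmarg : ∑ j, (Wᴴ * ρ * W) (i, j) (i, j) = hH1.eigenvalues i := h
    simp only [hd] at hmarg
    exact_mod_cast hmarg
  have hq : ∀ j, ∑ i, d (i, j) = hH2.eigenvalues j := by
    intro j
    have h := congrFun (congrFun (ptrace1_conj ρ U V hU) j) j
    rw [hVdef, hH2.conj_eigenvectorUnitary, Matrix.diagonal_apply_eq] at h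
    have hmarg : ∑ i, (Wᴴ * ρ * W) (i, j) (i, j) = hH2.eigenvalues j := h
    simp only [hd] at hmarg
    exact_mod_cast hmarg
  -- A vanishing marginal forces every entry of its row or column to vanish.
  have hsupp : ∀ a : Fin n × Fin m,
      hH1.eigenvalues a.1 * hH2.eigenvalues a.2 = 0 → d a = 0 := by
    rintro ⟨i, j⟩ h
    rcases mul_eq_zero.1 h with h | h
    · rw [← hp] at h
      exact (Finset.sum_eq_zero_iff_of_nonneg fun j _ => hd0 (i, j)).1 h j (Finset.mem_univ j)
    · rw [← hq] at h
      exact (Finset.sum_eq_zero_iff_of_nonneg fun i _ => hd0 (i, j)).1 h i (Finset.mem_univ i)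
  have hsum : ∑ a : Fin n × Fin m, hH1.eigenvalues a.1 * hH2.eigenvalues a.2 = 1 := by
    rw [Fintype.sum_prod_type]
    simp only [← Finset.mul_sum]
    rw [hρ.ptrace1.sum_eigenvalues]
    simpa using hρ.ptrace2.sum_eigenvalues
  have key := klein_of_unitary hρ hW d
    (fun a => hH1.eigenvalues a.1 * hH2.eigenvalues a.2) hd
    (fun a => mul_nonneg (hρ.ptrace2.1.eigenvalues_nonneg _) (hρ.ptrace1.1.eigenvalues_nonneg _))
    hsum hsupp
  rw [sum_mul_log_marginals d _ _ hp hq hsupp] at key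
  linarith
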